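/- Let m, n be positive integers and let A3 (n×n) and A4 (m×m) be Hermitian positive definite complex matrices. Then ∫ DS exp(−tr(A3 Sᴴ A4 S)) = 1 / det(A3 ⊗ A4), where the integral ranges over all m×n complex matrices S and ⊗ denotes the Kronecker product of matrices. -/

import Mathlib

open MeasureTheory Matrix Complex
open scoped Kronecker ComplexOrder

lemma gauss_c : ∫ z : ℂ, Complex.exp (-((‖z‖ : ℂ) ^ 2)) = Real.pi := by
  have h := GaussianFourier.integral_cexp_neg_mul_sq_norm (V := ℂ) (b := 1) (by simp)
  simpa using h

lemma gauss_S (m n : ℕ) : ∫ S : Fin m → Fin n → ℂ, Complex.exp (-Matrix.trace ((Matrix.of S)ᴴ * Matrix.of S))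
    = (Real.pi : ℂ) ^ (m * n) := by
  have h1 : ∀ S : Fin m → Fin n → ℂ, Complex.exp (-Matrix.trace ((Matrix.of S)ᴴ * Matrix.of S))
      = ∏ i, ∏ j, Complex.exp (-((‖S i j‖ : ℂ) ^ 2)) := by
    intro S
    simp only [← Complex.exp_sum, Finset.sum_neg_distrib]
    congr 2
    simp only [Matrix.trace, Matrix.diag, Matrix.mul_apply, Matrix.conjTranspose_apply, Matrix.of_apply]
    rw [Finset.sum_comm]
    simp [Complex.conj_mul']
  simp only [h1]
  rw [integral_fintype_prod_volume_eq_prod (𝕜 := ℂ) (fun (_ : Fin m) (r : Fin n → ℂ) => ∏ j, Complex.exp (-((‖r j‖ : ℂ) ^ 2)))]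
  simp only [integral_fintype_prod_volume_eq_prod (𝕜 := ℂ) (fun (_ : Fin n) (z : ℂ) => Complex.exp (-((‖z‖ : ℂ) ^ 2))), gauss_c]
  simp [← pow_mul, mul_comm]

def theMap (m n : ℕ) (Q : Matrix (Fin m) (Fin m) ℂ) (P : Matrix (Fin n) (Fin n) ℂ) :
    (Fin m → Fin n → ℂ) →ₗ[ℂ] (Fin m → Fin n → ℂ) where
  toFun S := Q * Matrix.of S * P
  map_add' S T := by
    change Q * (Matrix.of S + Matrix.of T) * P = _
    rw [Matrix.mul_add, Matrix.add_mul]; rfl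
  map_smul' c S := by
    change Q * (c • Matrix.of S) * P = _
    rw [Matrix.mul_smul, Matrix.smul_mul]; rfl

def vecE (m n : ℕ) : (Fin m → Fin n → ℂ) ≃ₗ[ℂ] (Fin n × Fin m → ℂ) where
  toFun S := fun x => S x.2 x.1
  invFun f := fun i j => f (j, i)
  map_add' _ _ := rfl
  map_smul' _ _ := rfl
  left_inv _ := rfl
  right_inv _ := rfl

lemma det_theMap (m n : ℕ) (Q : Matrix (Fin m) (Fin m) ℂ) (P : Matrix (Fin n) (Fin n) ℂ) :
    LinearMap.det (theMap m n Q P) = P.det ^ m * Q.det ^ n := by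
  have h : (vecE m n : _ →ₗ[ℂ] _) ∘ₗ theMap m n Q P ∘ₗ ((vecE m n).symm : _ →ₗ[ℂ] _)
      = Matrix.toLin' (Pᵀ ⊗ₖ Q) := by
    apply LinearMap.ext
    intro f
    have := Matrix.kronecker_mulVec_vec Q (Matrix.of ((vecE m n).symm f)) Pᵀ
    rw [Matrix.transpose_transpose] at this
    exact this.symm
  have h2 := LinearMap.det_conj (theMap m n Q P) (vecE m n)
  rw [h, LinearMap.det_toLin', Matrix.det_kronecker] at h2
  simpa using h2.symm

lemma cov (m n : ℕ) (f : (Fin m → Fin n → ℂ) →ₗ[ℂ] (Fin m → Fin n → ℂ)) (hf : LinearMap.det f ≠ 0)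
    (g : (Fin m → Fin n → ℂ) → ℂ) (hg : Continuous g) :
    ∫ S, g (f S) = ((‖LinearMap.det f‖ ^ 2 : ℝ) : ℂ)⁻¹ * ∫ S, g S := by
  have hd : LinearMap.det (f.restrictScalars ℝ) = ‖LinearMap.det f‖ ^ 2 := by
    rw [LinearMap.det_restrictScalars, Algebra.norm_complex_apply, Complex.normSq_eq_norm_sq]
  have hd0 : LinearMap.det (f.restrictScalars ℝ) ≠ 0 := by
    rw [hd]; positivity
  haveI : (volume : Measure (Fin m → Fin n → ℂ)).IsAddHaarMeasure := Measure.pi.isAddHaarMeasure _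
  have hm := Measure.map_linearMap_addHaar_eq_smul_addHaar (volume : Measure (Fin m → Fin n → ℂ)) hd0
  have hc : Continuous (f.restrictScalars ℝ) := LinearMap.continuous_of_finiteDimensional _
  have := integral_map (μ := volume) hc.aemeasurable (f := g) hg.aestronglyMeasurable
  rw [hm, integral_smul_measure, hd] at this
  rw [LinearMap.coe_restrictScalars] at this
  rw [← this, abs_of_nonneg (by positivity), ENNReal.toReal_ofReal (by positivity)]
  simp [Complex.real_smul]

open scoped MatrixOrder in
lemma exists_factor {k : ℕ} {A : Matrix (Fin k) (Fin k) ℂ} (hA : A.PosDef) :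
    ∃ R : Matrix (Fin k) (Fin k) ℂ, A = Rᴴ * R :=
  CStarAlgebra.nonneg_iff_eq_star_mul_self.mp hA.posSemidef.nonneg

/-- Gaussian matrix integral, zero-mean case. -/
theorem statement1 (m n : ℕ) (hm : 0 < m) (hn : 0 < n)
    (A3 : Matrix (Fin n) (Fin n) ℂ) (A4 : Matrix (Fin m) (Fin m) ℂ)
    (hA3 : A3.PosDef) (hA4 : A4.PosDef) :
    (1 / (Real.pi : ℂ) ^ (m * n)) *
      (∫ S : Fin m → Fin n → ℂ,
        Complex.exp (-Matrix.trace (A3 * (Matrix.of S)ᴴ * A4 * Matrix.of S))) =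
    1 / Matrix.det (A3 ⊗ₖ A4) := by
  have d3 := hA3.det_pos.ne'
  have d4 := hA4.det_pos.ne'
  obtain ⟨R, rfl⟩ : ∃ R, A3 = Rᴴ * R := exists_factor hA3
  obtain ⟨Q, rfl⟩ : ∃ R, A4 = Rᴴ * R := exists_factor hA4
  rw [Matrix.det_mul, Matrix.det_conjTranspose] at d3 d4
  have e3 := right_ne_zero_of_mul d3
  have e4 := right_ne_zero_of_mul d4
  have hdet := det_theMap m n Q Rᴴ
  have hne : LinearMap.det (theMap m n Q Rᴴ) ≠ 0 := by
    rw [hdet, Matrix.det_conjTranspose]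
    exact mul_ne_zero (pow_ne_zero _ (left_ne_zero_of_mul d3)) (pow_ne_zero _ e4)
  have hg : Continuous (fun S : Fin m → Fin n → ℂ =>
      Complex.exp (-Matrix.trace ((Matrix.of S)ᴴ * Matrix.of S))) := by
    have h0 : Continuous (fun S : Fin m → Fin n → ℂ => Matrix.of S) := continuous_id
    exact Complex.continuous_exp.comp ((h0.matrix_conjTranspose.matrix_mul h0).matrix_trace.neg)
  have hc := cov m n (theMap m n Q Rᴴ) hne _ hg
  rw [gauss_S] at hc
  have hS : ∀ S : Fin m → Fin n → ℂ, Matrix.trace ((Rᴴ * R) * (Matrix.of S)ᴴ * (Qᴴ * Q) * Matrix.of S)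
      = Matrix.trace ((Matrix.of (theMap m n Q Rᴴ S))ᴴ * Matrix.of (theMap m n Q Rᴴ S)) := by
    intro S
    change _ = Matrix.trace ((Q * Matrix.of S * Rᴴ)ᴴ * (Q * Matrix.of S * Rᴴ))
    simp only [Matrix.conjTranspose_mul, Matrix.conjTranspose_conjTranspose, Matrix.mul_assoc]
    rw [Matrix.trace_mul_comm]
    simp only [Matrix.mul_assoc]
  simp only [hS]
  rw [hc, hdet, Matrix.det_kronecker]
  have hpi : (Real.pi : ℂ) ≠ 0 := by exact_mod_cast Real.pi_ne_zero
  rw [mul_comm, mul_assoc, mul_one_div_cancel (pow_ne_zero _ hpi), mul_one, ← one_div]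
  congr 1
  simp only [Matrix.det_mul, Matrix.det_conjTranspose, Fintype.card_fin]
  push_cast
  rw [← Complex.conj_mul']
  simp only [map_mul, map_pow, starRingEnd_apply, star_star]
  ring
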